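/- Let a > 0. Then Θ₀ < α(a,m) ≤ Θ₀ + C/√m for some constant C > 0 and all m sufficiently large; in particular lim_{m→∞} α(a,m) = Θ₀. -/

import Mathlib

open MeasureTheory Set Filter Topology

noncomputable section

/-- `B¹(ℝ₊)`-type regularity on the half line (smooth core):
`u`, `u'` and `t·u` are square integrable on `(0,∞)`. -/
def MemB1p (u : ℝ → ℝ) : Prop :=
  Differentiable ℝ u ∧
  IntegrableOn (fun t => (u t)^2) (Ioi 0) ∧
  IntegrableOn (fun t => (deriv u t)^2) (Ioi 0) ∧
  IntegrableOn (fun t => t^2 * (u t)^2) (Ioi 0)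

/-- The Robin quadratic form `q[γ,ξ]` of `-d²/dt² + (t-ξ)²` on `ℝ₊`. -/
def qRobin (γ ξ : ℝ) (u : ℝ → ℝ) : ℝ :=
  (∫ t in Ioi (0:ℝ), ((deriv u t)^2 + (t - ξ)^2 * (u t)^2)) + γ * (u 0)^2

/-- squared `L²(ℝ₊)` norm. -/
def np (u : ℝ → ℝ) : ℝ := ∫ t in Ioi (0:ℝ), (u t)^2

/-- Lowest Robin eigenvalue `λ₁(γ,ξ)`, defined variationally. -/
def lambda1 (γ ξ : ℝ) : ℝ :=
  sInf {r : ℝ | ∃ u : ℝ → ℝ, MemB1p u ∧ np u ≠ 0 ∧ r = qRobin γ ξ u / np u}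

/-- Lowest Neumann eigenvalue `λ₁^N(ξ)` (Robin with `γ = 0`). -/
def lambda1N (ξ : ℝ) : ℝ := lambda1 0 ξ

/-- Lowest Dirichlet eigenvalue `λ₁^D(ξ)`, defined variationally. -/
def lambda1D (ξ : ℝ) : ℝ :=
  sInf {r : ℝ | ∃ u : ℝ → ℝ, MemB1p u ∧ u 0 = 0 ∧ np u ≠ 0 ∧ r = qRobin 0 ξ u / np u}

/-- The de Gennes constant `Θ₀ = inf_ξ λ₁^N(ξ)`. -/
def Theta0 : ℝ := sInf (Set.range lambda1N)

/-- `B¹(ℝ)`-type regularity on the whole line (smooth core). -/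
def MemB1 (u : ℝ → ℝ) : Prop :=
  Differentiable ℝ u ∧
  Integrable (fun t => (u t)^2) ∧
  Integrable (fun t => (deriv u t)^2) ∧
  Integrable (fun t => t^2 * (u t)^2)

/-- The interface quadratic form `Q[a,m,α;ξ]` on `B¹(ℝ)`. -/
def QI (a m α ξ : ℝ) (u : ℝ → ℝ) : ℝ :=
  (∫ t in Ioi (0:ℝ), ((deriv u t)^2 + (t - ξ)^2 * (u t)^2 - α * (u t)^2)) +
  ∫ t in Iio (0:ℝ), ((1/m) * ((deriv u t)^2 + (t - ξ)^2 * (u t)^2) + a * α * (u t)^2)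

/-- squared `L²(ℝ)` norm. -/
def nR (u : ℝ → ℝ) : ℝ := ∫ t, (u t)^2

/-- Ground state energy `μ₁(a,m,α;ξ)` of the interface operator, defined variationally. -/
def mu1 (a m α ξ : ℝ) : ℝ :=
  sInf {r : ℝ | ∃ u : ℝ → ℝ, MemB1 u ∧ nR u ≠ 0 ∧ r = QI a m α ξ u / nR u}

/-- The critical value `α(a,m)` (the unique `α > 0` with `inf_ξ μ₁(a,m,α;ξ) = 0`). -/
def alphaF (a m : ℝ) : ℝ :=
  sInf {α : ℝ | 0 < α ∧ sInf (Set.range (mu1 a m α)) = 0}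

lemma q_integrable {u : ℝ → ℝ} (hu : MemB1p u) (ξ : ℝ) :
    IntegrableOn (fun t => (deriv u t)^2 + (t - ξ)^2 * (u t)^2) (Ioi 0) := by
  obtain ⟨hd, h0, h1, h2⟩ := hu
  have hm : Measurable u := hd.continuous.measurable
  have hm' := measurable_deriv u
  refine Integrable.add h1 ?_
  refine Integrable.mono' ((h2.const_mul 2).add (h0.const_mul (2 * ξ^2)))
    (by fun_prop) (ae_of_all _ fun t => ?_)
  rw [Real.norm_eq_abs, abs_of_nonneg (by positivity)]
  simp only [Pi.add_apply]
  nlinarith [mul_nonneg (sq_nonneg (t + ξ)) (sq_nonneg (u t))]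

lemma q_lower {u : ℝ → ℝ} (hu : MemB1p u) (ξ c B : ℝ) (W W' : ℝ → ℝ)
    (hW : ∀ t, HasDerivAt W (W' t) t) (hWc : Measurable W')
    (hB : ∀ t, |W t| ≤ B) (hB' : ∀ t, |W' t| ≤ B)
    (hc : ∀ t, c ≤ (t - ξ)^2 + W' t - W t ^ 2) :
    c * np u + W 0 * u 0 ^ 2 ≤ qRobin 0 ξ u := by
  have hq := q_integrable hu ξ
  obtain ⟨hd, h0, h1, h2⟩ := hu
  have hm : Measurable u := hd.continuous.measurable
  have hm' := measurable_deriv u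
  have hWm : Measurable W := (continuous_iff_continuousAt.2 fun t => (hW t).continuousAt).measurable
  have hB0 : 0 ≤ B := (abs_nonneg _).trans (hB 0)
  have hg : ∀ t, HasDerivAt (fun t => W t * u t ^ 2) (W' t * u t ^ 2 + W t * (2 * u t * deriv u t)) t := by
    intro t
    exact ((hW t).mul ((hd t).hasDerivAt.pow 2)).congr_deriv (by simp)
  have hgi : IntegrableOn (fun t => W t * u t ^ 2) (Ioi 0) := by
    refine Integrable.mono' (h0.const_mul B) (by fun_prop) (ae_of_all _ fun t => ?_)
    rw [Real.norm_eq_abs, abs_mul, abs_of_nonneg (sq_nonneg (u t))]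
    exact mul_le_mul_of_nonneg_right (hB t) (sq_nonneg _)
  have hgi' : IntegrableOn (fun t => W' t * u t ^ 2 + W t * (2 * u t * deriv u t)) (Ioi 0) := by
    refine Integrable.mono' ((h0.const_mul (2*B)).add (h1.const_mul B)) (by fun_prop)
      (ae_of_all _ fun t => ?_)
    rw [Real.norm_eq_abs]
    simp only [Pi.add_apply]
    refine (abs_add_le _ _).trans ?_
    rw [abs_mul, abs_mul, abs_of_nonneg (sq_nonneg (u t))]
    have e1 := mul_le_mul_of_nonneg_right (hB' t) (sq_nonneg (u t))
    have e3 : |2 * u t * deriv u t| ≤ u t ^ 2 + deriv u t ^ 2 := by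
      rw [abs_le]; constructor <;> nlinarith [sq_nonneg (u t + deriv u t), sq_nonneg (u t - deriv u t)]
    have e2 := mul_le_mul (hB t) e3 (abs_nonneg _) hB0
    nlinarith
  have hlim := tendsto_zero_of_hasDerivAt_of_integrableOn_Ioi (a := (0:ℝ)) (fun t _ => hg t) hgi' hgi
  have hI := integral_Ioi_of_hasDerivAt_of_tendsto' (a := (0:ℝ)) (fun t _ => hg t) hgi' hlim
  have hmono : ∫ t in Ioi (0:ℝ), (c * u t ^ 2 - (W' t * u t ^ 2 + W t * (2 * u t * deriv u t))) ≤
      ∫ t in Ioi (0:ℝ), ((deriv u t)^2 + (t - ξ)^2 * (u t)^2) := by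
    refine integral_mono ((h0.const_mul c).sub hgi') hq fun t => ?_
    have := mul_le_mul_of_nonneg_right (hc t) (sq_nonneg (u t))
    simp only
    nlinarith [sq_nonneg (deriv u t + W t * u t)]
  rw [integral_sub (h0.const_mul c) hgi', hI, integral_const_mul] at hmono
  unfold qRobin np
  linarith

lemma np_nonneg (u : ℝ → ℝ) : 0 ≤ np u := integral_nonneg fun t => sq_nonneg _

lemma qN_nonneg (ξ : ℝ) (u : ℝ → ℝ) : 0 ≤ qRobin 0 ξ u := by
  unfold qRobin
  have : 0 ≤ ∫ t in Ioi (0:ℝ), ((deriv u t)^2 + (t - ξ)^2 * (u t)^2) :=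
    integral_nonneg fun t => by positivity
  linarith

lemma trace_right {u : ℝ → ℝ} (hu : MemB1p u) (ξ : ℝ) :
    u 0 ^ 2 ≤ qRobin 0 ξ u + np u := by
  have := q_lower hu ξ (-1) 1 (fun _ => 1) (fun _ => 0) (fun t => hasDerivAt_const _ _)
    measurable_const (by simp) (by simp) (fun t => by nlinarith [sq_nonneg (t - ξ)])
  linarith

/-- The weight `b + k s/(1+e s²)`. -/
lemma weight_deriv (e ξ b k : ℝ) (he : 0 < e) (t : ℝ) :
    HasDerivAt (fun t => b + k * ((t - ξ) / (1 + e * (t - ξ)^2)))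
      (k * ((1 - e * (t - ξ)^2) / (1 + e * (t - ξ)^2)^2)) t := by
  have h1 : HasDerivAt (fun t : ℝ => t - ξ) 1 t := (hasDerivAt_id t).sub_const ξ
  have h2 : HasDerivAt (fun t : ℝ => 1 + e * (t - ξ)^2) (e * (2 * (t - ξ))) t := by
    exact (((h1.pow 2).const_mul e).const_add 1).congr_deriv (by simp)
  have hne : 1 + e * (t - ξ)^2 ≠ 0 := by positivity
  refine (((h1.div h2 hne).const_mul k).const_add b).congr_deriv ?_
  field_simp
  ring

lemma weight_bd (e s : ℝ) (he : 0 < e) (he1 : e ≤ 1) :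
    |s / (1 + e * s^2)| ≤ 1 / e ∧ |(1 - e * s^2) / (1 + e * s^2)^2| ≤ 1 := by
  have hp : 0 < 1 + e * s^2 := by positivity
  constructor
  · rw [abs_div, abs_of_pos hp, div_le_div_iff₀ hp he]
    have := sq_abs s
    nlinarith [sq_nonneg (|s| - 1), abs_nonneg s, mul_nonneg he.le (sq_nonneg (|s| - 1))]
  · rw [abs_div, abs_of_pos (pow_pos hp 2), div_le_one (pow_pos hp 2), abs_le]
    have : 0 ≤ e * s^2 := by positivity
    constructor <;> nlinarith

lemma q_lower1 {u : ℝ → ℝ} (hu : MemB1p u) (ξ : ℝ) :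
    (31/40) * np u + (-ξ / (1 + (1/10) * ξ^2)) * u 0 ^ 2 ≤ qRobin 0 ξ u := by
  have := q_lower hu ξ (31/40) 10 _ _ (fun t => weight_deriv (1/10) ξ 0 1 (by norm_num) t)
    (by fun_prop)
    (fun t => by
      have := (weight_bd (1/10) (t - ξ) (by norm_num) (by norm_num)).1
      rw [zero_add, one_mul]; linarith)
    (fun t => by
      have := (weight_bd (1/10) (t - ξ) (by norm_num) (by norm_num)).2
      rw [one_mul]; linarith)
    (fun t => by
      set s := t - ξ
      have hp : 0 < 1 + (1/10) * s^2 := by positivity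
      have : s^2 + 1 * ((1 - 1/10 * s^2) / (1 + 1/10 * s^2)^2) - (0 + 1 * (s / (1 + 1/10 * s^2)))^2 - 31/40
        = (s^2 * (1 + 1/10 * s^2)^2 + (1 - 1/10 * s^2) - s^2 - 31/40 * (1 + 1/10 * s^2)^2) / (1 + 1/10 * s^2)^2 := by
        field_simp
        ring
      have h2 : 0 ≤ s^2 * (1 + 1/10 * s^2)^2 + (1 - 1/10 * s^2) - s^2 - 31/40 * (1 + 1/10 * s^2)^2 := by
        have hx : 0 ≤ s^2 := sq_nonneg s
        generalize s^2 = x at *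
        nlinarith [pow_nonneg hx 3, pow_nonneg hx 2, sq_nonneg (x - 3/4), sq_nonneg (x-1)]
      have := div_nonneg h2 (pow_pos hp 2).le
      linarith)
  simpa using this

lemma q_lower1' {u : ℝ → ℝ} (hu : MemB1p u) (ξ : ℝ) :
    (31/40) * np u - 10 * u 0 ^ 2 ≤ qRobin 0 ξ u := by
  have h := q_lower1 hu ξ
  have := (abs_le.1 (weight_bd (1/10) (-ξ) (by norm_num) (by norm_num)).1).1
  rw [neg_sq] at this
  nlinarith [mul_le_mul_of_nonneg_right this (sq_nonneg (u 0))]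

lemma q_lower2 {u : ℝ → ℝ} (hu : MemB1p u) (ξ : ℝ) :
    (1/8) * np u ≤ qRobin 0 ξ u := by
  have hb : ∀ s : ℝ, |s / (1 + 1 * s^2)| ≤ 1/2 := fun s => by
    have hp : 0 < 1 + 1 * s^2 := by positivity
    rw [abs_div, abs_of_pos hp, div_le_iff₀ hp]
    nlinarith [sq_nonneg (|s| - 1), sq_abs s]
  have := q_lower hu ξ (1/8) 10 _ _ (fun t => weight_deriv 1 ξ (1/4) (1/2) (by norm_num) t)
    (by fun_prop)
    (fun t => by
      have := abs_le.1 (hb (t - ξ))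
      rw [abs_le]; constructor <;> linarith)
    (fun t => by
      have := abs_le.1 (weight_bd 1 (t - ξ) (by norm_num) (by norm_num)).2
      rw [abs_le]; constructor <;> linarith)
    (fun t => by
      set s := t - ξ
      have hp : 0 < 1 + 1 * s^2 := by positivity
      have e1 : (1/4 + 1/2 * (s / (1 + 1 * s^2)))^2 ≤ 1/8 + 1/2 * (s^2 / (1 + 1 * s^2)^2) := by
        rw [← div_pow]
        nlinarith [sq_nonneg (1/4 - 1/2 * (s / (1 + 1 * s^2)))]
      have : s^2 + 1/2 * ((1 - 1 * s^2) / (1 + 1 * s^2)^2) - (1/8 + 1/2 * (s^2 / (1 + 1 * s^2)^2)) - 1/8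
        = ((s^2 - 1/4) * (1 + 1 * s^2)^2 + 1/2 * (1 - s^2) - 1/2 * s^2) / (1 + 1 * s^2)^2 := by
        field_simp
        ring
      have h2 : 0 ≤ (s^2 - 1/4) * (1 + 1 * s^2)^2 + 1/2 * (1 - s^2) - 1/2 * s^2 := by
        have hx : 0 ≤ s^2 := sq_nonneg s
        generalize s^2 = x at *
        nlinarith [pow_nonneg hx 3, pow_nonneg hx 2, sq_nonneg (x - 1/7)]
      have := div_nonneg h2 (pow_pos hp 2).le
      linarith)
  have h3 := (abs_le.1 (hb (0 - ξ))).1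
  have h4 : 0 ≤ (1/4 + 1/2 * ((0 - ξ) / (1 + 1 * (0-ξ)^2))) * u 0 ^ 2 :=
    mul_nonneg (by linarith) (sq_nonneg _)
  linarith

/-- The Gaussian trial function. -/
def gau (t : ℝ) : ℝ := Real.exp (-(1/2) * t^2)

lemma gau_sq (t : ℝ) : gau t ^ 2 = Real.exp (-1 * t^2) := by
  unfold gau
  rw [← Real.exp_nat_mul]; congr 1; push_cast; ring

lemma gau_deriv (t : ℝ) : HasDerivAt gau (-t * gau t) t := by
  unfold gau
  have h : HasDerivAt (fun t : ℝ => -(1/2) * t^2) (-t) t :=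
    ((hasDerivAt_pow 2 t).const_mul (-(1/2))).congr_deriv (by simp)
  exact h.exp.congr_deriv (by ring)

lemma gau_i2 : Integrable (fun t : ℝ => t^2 * Real.exp (-1 * t^2)) := by
  have := integrable_rpow_mul_exp_neg_mul_sq (b := 1) one_pos (s := 2) (by norm_num)
  simpa using this

lemma gau_memB1 : MemB1 gau := by
  refine ⟨fun t => (gau_deriv t).differentiableAt, ?_, ?_, ?_⟩
  · simp_rw [gau_sq]; exact integrable_exp_neg_mul_sq one_pos
  · have : (fun t => deriv gau t ^ 2) = fun t => t^2 * Real.exp (-1 * t^2) := by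
      ext t; rw [(gau_deriv t).deriv, mul_pow, gau_sq, neg_sq]
    rw [this]; exact gau_i2
  · simp_rw [gau_sq]; exact gau_i2

lemma MemB1.toP {u : ℝ → ℝ} (h : MemB1 u) : MemB1p u :=
  ⟨h.1, h.2.1.integrableOn, h.2.2.1.integrableOn, h.2.2.2.integrableOn⟩

lemma gau_np : np gau = Real.sqrt Real.pi / 2 := by
  unfold np
  simp_rw [gau_sq]
  rw [integral_gaussian_Ioi]; simp

lemma gau_np_pos : 0 < np gau := by
  rw [gau_np]; positivity

lemma gau_m1 : ∫ t in Ioi (0:ℝ), t * Real.exp (-1 * t^2) = 1/2 := by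
  have hd : ∀ t : ℝ, HasDerivAt (fun t : ℝ => -(1/2) * Real.exp (-1 * t^2)) (t * Real.exp (-1 * t^2)) t := by
    intro t
    have h : HasDerivAt (fun t : ℝ => -1 * t^2) (-(2 * t)) t :=
      ((hasDerivAt_pow 2 t).const_mul (-1)).congr_deriv (by simp)
    exact (h.exp.const_mul (-(1/2))).congr_deriv (by ring)
  have hi := (integrable_mul_exp_neg_mul_sq (b := 1) one_pos).integrableOn (s := Ioi (0:ℝ))
  have hl := tendsto_zero_of_hasDerivAt_of_integrableOn_Ioi (a := (0:ℝ)) (fun t _ => hd t) hi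
    ((integrable_exp_neg_mul_sq one_pos).const_mul _).integrableOn
  rw [integral_Ioi_of_hasDerivAt_of_tendsto' (a := (0:ℝ)) (fun t _ => hd t) hi hl]
  norm_num

lemma gau_m2 : ∫ t in Ioi (0:ℝ), t^2 * Real.exp (-1 * t^2) = np gau / 2 := by
  have hd : ∀ t : ℝ, HasDerivAt (fun t : ℝ => t * Real.exp (-1 * t^2))
      (Real.exp (-1 * t^2) - 2 * (t^2 * Real.exp (-1 * t^2))) t := by
    intro t
    have h : HasDerivAt (fun t : ℝ => -1 * t^2) (-(2 * t)) t :=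
      ((hasDerivAt_pow 2 t).const_mul (-1)).congr_deriv (by simp)
    exact ((hasDerivAt_id t).mul h.exp).congr_deriv (by simp; ring)
  have i0 := (integrable_exp_neg_mul_sq (b := 1) one_pos).integrableOn (s := Ioi (0:ℝ))
  have i2 := (gau_i2.const_mul 2).integrableOn (s := Ioi (0:ℝ))
  have hi := (integrable_mul_exp_neg_mul_sq (b := 1) one_pos).integrableOn (s := Ioi (0:ℝ))
  have hl := tendsto_zero_of_hasDerivAt_of_integrableOn_Ioi (a := (0:ℝ)) (fun t _ => hd t)
    (i0.sub i2) hi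
  have := integral_Ioi_of_hasDerivAt_of_tendsto' (a := (0:ℝ)) (fun t _ => hd t) (i0.sub i2) hl
  rw [integral_sub i0 i2, integral_const_mul] at this
  unfold np
  simp_rw [gau_sq]
  simp only [zero_mul, sub_zero] at this
  linarith

lemma gau_q (ξ : ℝ) : qRobin 0 ξ gau = np gau - ξ + ξ^2 * np gau := by
  unfold qRobin
  have : (fun t => deriv gau t ^ 2 + (t - ξ)^2 * gau t ^ 2) =
      fun t => 2 * (t^2 * Real.exp (-1 * t^2)) - 2 * ξ * (t * Real.exp (-1 * t^2))
        + ξ^2 * Real.exp (-1 * t^2) := by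
    ext t; rw [(gau_deriv t).deriv, mul_pow, gau_sq, neg_sq]; ring
  rw [this]
  have i0 := ((integrable_exp_neg_mul_sq (b := 1) one_pos).const_mul (ξ^2)).integrableOn (s := Ioi (0:ℝ))
  have i2 := (gau_i2.const_mul 2).integrableOn (s := Ioi (0:ℝ))
  have i1 := ((integrable_mul_exp_neg_mul_sq (b := 1) one_pos).const_mul (2*ξ)).integrableOn (s := Ioi (0:ℝ))
  have i21 : IntegrableOn (fun t : ℝ => 2 * (t^2 * Real.exp (-1 * t^2))
      - 2 * ξ * (t * Real.exp (-1 * t^2))) (Ioi 0) := i2.sub i1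
  rw [integral_add i21 i0, integral_sub i2 i1]
  simp only [integral_const_mul]
  rw [gau_m1, gau_m2]
  have : ∫ t in Ioi (0:ℝ), Real.exp (-1 * t^2) = np gau := by
    unfold np; simp_rw [gau_sq]
  rw [this]; ring

lemma lambda_set_lb (ξ : ℝ) (r : ℝ)
    (hr : r ∈ {r : ℝ | ∃ u : ℝ → ℝ, MemB1p u ∧ np u ≠ 0 ∧ r = qRobin 0 ξ u / np u}) : 1/8 ≤ r := by
  obtain ⟨u, hu, hn, rfl⟩ := hr
  have hp : 0 < np u := lt_of_le_of_ne (np_nonneg u) (Ne.symm hn)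
  rw [le_div_iff₀ hp]
  exact q_lower2 hu ξ

lemma lambda_set_ne (ξ : ℝ) :
    {r : ℝ | ∃ u : ℝ → ℝ, MemB1p u ∧ np u ≠ 0 ∧ r = qRobin 0 ξ u / np u}.Nonempty :=
  ⟨_, gau, gau_memB1.toP, gau_np_pos.ne', rfl⟩

lemma lambda1N_lb (ξ : ℝ) : 1/8 ≤ lambda1N ξ :=
  le_csInf (lambda_set_ne ξ) (lambda_set_lb ξ)

lemma range_bdd : BddBelow (Set.range lambda1N) :=
  ⟨1/8, by rintro _ ⟨ξ, rfl⟩; exact lambda1N_lb ξ⟩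

lemma Theta0_pos : 0 < Theta0 := by
  have : 1/8 ≤ Theta0 := le_csInf (range_nonempty _) (by rintro _ ⟨ξ, rfl⟩; exact lambda1N_lb ξ)
  linarith

lemma Theta0_le {u : ℝ → ℝ} (hu : MemB1p u) (ξ : ℝ) : Theta0 * np u ≤ qRobin 0 ξ u := by
  rcases (np_nonneg u).eq_or_lt with h | h
  · rw [← h, mul_zero]; exact qN_nonneg ξ u
  · rw [← le_div_iff₀ h]
    exact (csInf_le range_bdd ⟨ξ, rfl⟩).trans
      (csInf_le ⟨1/8, fun r hr => lambda_set_lb ξ r hr⟩ ⟨u, hu, h.ne', rfl⟩)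

lemma Theta0_lt : Theta0 < 7/10 := by
  have h := Theta0_le gau_memB1.toP (1 / (2 * np gau))
  rw [gau_q] at h
  have hp := gau_np_pos
  have hsq : np gau ^ 2 = Real.pi / 4 := by
    rw [gau_np, div_pow, Real.sq_sqrt Real.pi_pos.le]; norm_num
  have e : np gau - 1 / (2 * np gau) + (1 / (2 * np gau))^2 * np gau = (np gau ^2 - 1/4) / np gau := by
    field_simp; ring
  rw [e, le_div_iff₀ hp] at h
  have := Real.pi_lt_d2
  have h3 : Theta0 * np gau ^ 2 ≤ np gau ^ 2 - 1/4 := by nlinarith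
  rw [hsq] at h3
  nlinarith [Real.pi_pos]

lemma near_min (η : ℝ) (hη : 0 < η) : ∃ ξ u, MemB1p u ∧ 0 < np u ∧
    qRobin 0 ξ u ≤ (Theta0 + η) * np u := by
  obtain ⟨_, ⟨ξ, rfl⟩, h⟩ := exists_lt_of_csInf_lt (range_nonempty lambda1N)
    (show sInf (Set.range lambda1N) < Theta0 + η by unfold Theta0; linarith)
  obtain ⟨r, ⟨u, hu, hn, rfl⟩, h2⟩ := exists_lt_of_csInf_lt (lambda_set_ne ξ) h
  have hp : 0 < np u := lt_of_le_of_ne (np_nonneg u) (Ne.symm hn)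
  exact ⟨ξ, u, hu, hp, ((div_lt_iff₀ hp).1 h2).le⟩

/-- A near minimizer has bounded boundary trace and bounded frequency. -/
lemma near_bdd {u : ℝ → ℝ} {ξ : ℝ} (hu : MemB1p u) (hp : 0 < np u)
    (h : qRobin 0 ξ u ≤ 7/10 * np u) : u 0 ^ 2 ≤ 2 * np u ∧ ξ^2 ≤ 300^2 := by
  have ht := trace_right hu ξ
  have h0 : u 0 ^ 2 ≤ 2 * np u := by linarith
  refine ⟨h0, ?_⟩
  have h1 : ξ ≤ 300 := by
    by_contra! hc
    have h2 := q_lower1 hu ξ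
    have h3 : -(10/300) ≤ -ξ / (1 + (1/10) * ξ^2) := by
      rw [le_div_iff₀ (by positivity)]
      nlinarith
    nlinarith [mul_le_mul_of_nonneg_right h3 (sq_nonneg (u 0))]
  have h2 : -300 ≤ ξ := by
    by_contra! hc
    have hi := q_integrable hu ξ
    have : ∫ t in Ioi (0:ℝ), u t ^ 2 ≤ ∫ t in Ioi (0:ℝ), ((deriv u t)^2 + (t - ξ)^2 * (u t)^2) := by
      refine setIntegral_mono_on hu.2.1 hi measurableSet_Ioi fun t ht => ?_
      have ht : 0 < t := ht
      have : 1 ≤ (t - ξ)^2 := by nlinarith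
      nlinarith [sq_nonneg (deriv u t), mul_le_mul_of_nonneg_right this (sq_nonneg (u t))]
    unfold qRobin at h
    unfold np at h hp
    linarith
  nlinarith

/-- Reflection. -/
def rfx (u : ℝ → ℝ) (t : ℝ) : ℝ := u (-t)

lemma deriv_rfx (u : ℝ → ℝ) (t : ℝ) : deriv (rfx u) t = - deriv u (-t) :=
  deriv_comp_neg u t

lemma MemB1.rfx {u : ℝ → ℝ} (h : MemB1 u) : MemB1 (rfx u) := by
  obtain ⟨h0, h1, h2, h3⟩ := h
  refine ⟨h0.comp differentiable_neg, h1.comp_neg, ?_, ?_⟩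
  · simp_rw [deriv_rfx, neg_sq]; exact h2.comp_neg
  · have := h3.comp_neg
    simp_rw [neg_sq] at this
    exact this

lemma np_rfx (u : ℝ → ℝ) : np (rfx u) = ∫ t in Iio (0:ℝ), u t ^ 2 := by
  unfold np rfx
  rw [integral_comp_neg_Ioi (0:ℝ) (fun t => u t ^ 2), neg_zero, integral_Iic_eq_integral_Iio]

lemma q_rfx (u : ℝ → ℝ) (ξ : ℝ) : qRobin 0 (-ξ) (rfx u) =
    ∫ t in Iio (0:ℝ), ((deriv u t)^2 + (t - ξ)^2 * (u t)^2) := by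
  unfold qRobin
  have := integral_comp_neg_Ioi (0:ℝ) (fun t => (deriv u t)^2 + (t - ξ)^2 * (u t)^2)
  rw [neg_zero, integral_Iic_eq_integral_Iio] at this
  rw [← this, zero_mul, add_zero]
  congr 1
  ext t
  rw [deriv_rfx]
  unfold rfx
  ring

lemma q_integrable_neg {u : ℝ → ℝ} (hu : MemB1 u) (ξ : ℝ) :
    IntegrableOn (fun t => (deriv u t)^2 + (t - ξ)^2 * (u t)^2) (Iio 0) := by
  obtain ⟨hd, h0, h1, h2⟩ := hu
  have hm : Measurable u := hd.continuous.measurable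
  have hm' := measurable_deriv u
  refine (Integrable.add h1 ?_).integrableOn
  refine Integrable.mono' ((h2.const_mul 2).add (h0.const_mul (2 * ξ^2)))
    (by fun_prop) (ae_of_all _ fun t => ?_)
  rw [Real.norm_eq_abs, abs_of_nonneg (by positivity)]
  simp only [Pi.add_apply]
  nlinarith [mul_nonneg (sq_nonneg (t + ξ)) (sq_nonneg (u t))]

lemma QI_eq {u : ℝ → ℝ} (hu : MemB1 u) (a m α ξ : ℝ) :
    QI a m α ξ u = qRobin 0 ξ u - α * np u
      + ((1/m) * qRobin 0 (-ξ) (rfx u) + a * α * np (rfx u)) := by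
  rw [q_rfx, np_rfx]
  unfold QI qRobin np
  have i0 := hu.2.1.integrableOn (s := Ioi (0:ℝ))
  have i1 := hu.2.1.integrableOn (s := Iio (0:ℝ))
  have j0 := q_integrable hu.toP ξ
  have j1 := q_integrable_neg hu ξ
  rw [integral_sub j0 (i0.const_mul α), integral_add (j1.const_mul (1/m)) (i1.const_mul (a*α))]
  simp only [integral_const_mul]
  ring

lemma nR_eq {u : ℝ → ℝ} (hu : MemB1 u) : nR u = np u + np (rfx u) := by
  rw [np_rfx, ← integral_Iic_eq_integral_Iio]
  unfold nR np
  rw [← intervalIntegral.integral_Iic_add_Ioi (b := (0:ℝ)) hu.2.1.integrableOn hu.2.1.integrableOn]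
  ring

lemma nR_nonneg (u : ℝ → ℝ) : 0 ≤ nR u := integral_nonneg fun t => sq_nonneg _

lemma QI_lip {u : ℝ → ℝ} (hu : MemB1 u) {a m : ℝ} (ha : 0 < a) (α β ξ : ℝ) :
    QI a m α ξ u ≤ QI a m β ξ u + ((1 + a) * |α - β|) * nR u := by
  rw [QI_eq hu, QI_eq hu, nR_eq hu]
  have h1 := np_nonneg u
  have h2 := np_nonneg (rfx u)
  have h3 := mul_le_mul_of_nonneg_right (neg_abs_le (α - β)) h1
  have h4 := mul_le_mul_of_nonneg_right (le_abs_self (α - β)) (mul_nonneg ha.le h2)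
  have h5 := mul_nonneg (abs_nonneg (α - β)) h2
  have h6 := mul_nonneg (mul_nonneg ha.le (abs_nonneg (α - β))) h1
  nlinarith

/-- Bottom of the spectrum over all frequencies. -/
def botE (a m α : ℝ) : ℝ := sInf (Set.range (mu1 a m α))

lemma mu_set_ne (a m α ξ : ℝ) :
    {r : ℝ | ∃ u : ℝ → ℝ, MemB1 u ∧ nR u ≠ 0 ∧ r = QI a m α ξ u / nR u}.Nonempty := by
  refine ⟨_, gau, gau_memB1, ?_, rfl⟩
  rw [nR_eq gau_memB1]
  have h : 0 < np gau + np (rfx gau) := by linarith [gau_np_pos, np_nonneg (rfx gau)]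
  exact h.ne'

lemma mu_set_lb {a m : ℝ} (α ξ c : ℝ)
    (h : ∀ u, MemB1 u → c * nR u ≤ QI a m α ξ u) (r : ℝ)
    (hr : r ∈ {r : ℝ | ∃ u : ℝ → ℝ, MemB1 u ∧ nR u ≠ 0 ∧ r = QI a m α ξ u / nR u}) : c ≤ r := by
  obtain ⟨u, hu, hn, rfl⟩ := hr
  have hp : 0 < nR u := lt_of_le_of_ne (nR_nonneg u) (Ne.symm hn)
  rw [le_div_iff₀ hp]
  exact h u hu

lemma QI_lb {u : ℝ → ℝ} (hu : MemB1 u) {a m : ℝ} (ha : 0 < a) (hm : 0 < m) (α ξ : ℝ) :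
    (-((1 + a) * |α|)) * nR u ≤ QI a m α ξ u := by
  have h := QI_lip hu (m := m) ha 0 α ξ
  have h2 : 0 ≤ QI a m 0 ξ u := by
    rw [QI_eq hu]
    have h3 := qN_nonneg ξ u
    have h4 := qN_nonneg (-ξ) (rfx u)
    have : 0 ≤ 1/m * qRobin 0 (-ξ) (rfx u) := by positivity
    linarith
  rw [zero_sub, abs_neg] at h
  linarith

lemma mu_le {u : ℝ → ℝ} (hu : MemB1 u) {a m : ℝ} (ha : 0 < a) (hm : 0 < m) (α ξ : ℝ) :
    mu1 a m α ξ * nR u ≤ QI a m α ξ u := by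
  rcases (nR_nonneg u).eq_or_lt with h | h
  · have := QI_lb hu ha hm α ξ
    rw [← h, mul_zero] at *
    exact this
  · rw [← le_div_iff₀ h]
    exact csInf_le ⟨_, fun r hr => mu_set_lb α ξ _ (fun u hu => QI_lb hu ha hm α ξ) r hr⟩
      ⟨u, hu, h.ne', rfl⟩

lemma le_mu {a m : ℝ} (α ξ c : ℝ)
    (h : ∀ u, MemB1 u → c * nR u ≤ QI a m α ξ u) : c ≤ mu1 a m α ξ :=
  le_csInf (mu_set_ne a m α ξ) (mu_set_lb α ξ c h)

lemma botE_le {u : ℝ → ℝ} (hu : MemB1 u) {a m : ℝ} (ha : 0 < a) (hm : 0 < m) (α ξ : ℝ) :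
    botE a m α * nR u ≤ QI a m α ξ u := by
  refine le_trans (mul_le_mul_of_nonneg_right ?_ (nR_nonneg u)) (mu_le hu ha hm α ξ)
  refine csInf_le ⟨-((1 + a) * |α|), ?_⟩ ⟨ξ, rfl⟩
  rintro _ ⟨ξ, rfl⟩
  exact le_mu α ξ _ fun u hu => QI_lb hu ha hm α ξ

lemma le_botE {a m : ℝ} (α c : ℝ)
    (h : ∀ ξ u, MemB1 u → c * nR u ≤ QI a m α ξ u) : c ≤ botE a m α :=
  le_csInf (range_nonempty _) (by rintro _ ⟨ξ, rfl⟩; exact le_mu α ξ c (h ξ))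

lemma botE_lip {a m : ℝ} (ha : 0 < a) (hm : 0 < m) (α β : ℝ) :
    botE a m α - (1 + a) * |α - β| ≤ botE a m β := by
  refine le_botE _ _ fun ξ u hu => ?_
  have h1 := botE_le hu ha hm α ξ
  have h2 := QI_lip hu (m := m) ha α β ξ
  linarith

lemma botE_cont {a m : ℝ} (ha : 0 < a) (hm : 0 < m) : Continuous (botE a m) := by
  have : LipschitzWith (Real.toNNReal (1 + a)) (botE a m) := by
    refine LipschitzWith.of_dist_le_mul fun α β => ?_
    rw [Real.coe_toNNReal _ (by linarith), Real.dist_eq, Real.dist_eq, abs_le]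
    have h1 := botE_lip ha hm α β
    have h2 := botE_lip ha hm β α
    rw [abs_sub_comm] at h2
    constructor <;> linarith
  exact this.continuous

lemma botE_pos {a m α : ℝ} (ha : 0 < a) (hm : 0 < m) (hα : 0 < α) (hle : α ≤ Theta0) :
    0 < botE a m α := by
  set γ := min (1/m) (a * α / 2) with hγ
  have hγ0 : 0 < γ := lt_min (by positivity) (by positivity)
  set σ := min (γ / 10) 1 with hσ
  have hσ0 : 0 < σ := lt_min (by positivity) one_pos
  have hσ1 : σ ≤ 1 := min_le_right _ _
  have hσγ : σ * 10 ≤ γ := by have := min_le_left (γ/10) 1; linarith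
  have hT := Theta0_lt
  set c := min (σ * (31/40 - Theta0)) (a * α / 2) with hc
  have hc0 : 0 < c := lt_min (mul_pos hσ0 (by linarith)) (by positivity)
  refine lt_of_lt_of_le hc0 (le_botE _ _ fun ξ u hu => ?_)
  rw [QI_eq hu, nR_eq hu]
  have n1 := np_nonneg u
  have n2 := np_nonneg (rfx u)
  have q2 := qN_nonneg (-ξ) (rfx u)
  have ht := trace_right hu.rfx.toP (-ξ)
  have hr0 : rfx u 0 = u 0 := by simp [rfx]
  rw [hr0] at ht
  have e1 := Theta0_le hu.toP ξ
  have e2 := q_lower1' hu.toP ξ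
  have f1 : γ * u 0 ^ 2 ≤ 1/m * qRobin 0 (-ξ) (rfx u) + a * α / 2 * np (rfx u) := by
    have a1 := mul_le_mul_of_nonneg_right (min_le_left (1/m) (a * α / 2)) q2
    have a2 := mul_le_mul_of_nonneg_right (min_le_right (1/m) (a * α / 2)) n2
    have a3 := mul_le_mul_of_nonneg_left ht hγ0.le
    linarith
  have g1 := mul_le_mul_of_nonneg_left e1 (sub_nonneg.2 hσ1)
  have g2 := mul_le_mul_of_nonneg_left e2 hσ0.le
  have g3 := mul_le_mul_of_nonneg_right hσγ (sq_nonneg (u 0))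
  have g4 := mul_le_mul_of_nonneg_right (min_le_left (σ * (31/40 - Theta0)) (a * α / 2)) n1
  have g5 := mul_le_mul_of_nonneg_right (min_le_right (σ * (31/40 - Theta0)) (a * α / 2)) n2
  have g6 := mul_le_mul_of_nonneg_right hle n1
  rw [← hc] at g4 g5
  linarith

/-- Left tail of the trial function. -/
def tail (A D κ L t : ℝ) : ℝ := A * Real.exp (κ * t) + D * (t * Real.exp (L * t))

/-- Derivative of the left tail. -/
def tail' (A D κ L t : ℝ) : ℝ :=
  A * (κ * Real.exp (κ * t)) + D * (Real.exp (L * t) + t * (L * Real.exp (L * t)))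

lemma tail_deriv (A D κ L t : ℝ) : HasDerivAt (tail A D κ L) (tail' A D κ L t) t := by
  have e : ∀ c : ℝ, HasDerivAt (fun t => Real.exp (c * t)) (c * Real.exp (c * t)) t := fun c =>
    (((hasDerivAt_id t).const_mul c).exp).congr_deriv (by simp; ring)
  exact (((e κ).const_mul A).add (((hasDerivAt_id t).mul (e L)).const_mul D)).congr_deriv
    (by simp [tail'])

lemma tail_bounds (A D κ L t : ℝ) (hκ : 2 ≤ κ) (hL : 4 ≤ L) (ht : t < 0) :
    tail A D κ L t ^ 2 ≤ 2 * A^2 * Real.exp (κ * t) + 2 * D^2 * Real.exp (L * t) ∧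
    t^2 * tail A D κ L t ^ 2 ≤ 2 * A^2 * Real.exp (κ * t) + 2 * D^2 * Real.exp (L * t) ∧
    tail' A D κ L t ^ 2 ≤ 2 * A^2 * κ^2 * Real.exp (κ * t) + 8 * D^2 * Real.exp (L * t) := by
  have hx : -t ≤ Real.exp (-t) := by linarith [Real.add_one_le_exp (-t)]
  have hx2 : t^2 ≤ Real.exp (-2 * t) := by
    have : Real.exp (-2 * t) = Real.exp (-t) ^ 2 := by
      rw [← Real.exp_nat_mul]; congr 1; push_cast; ring
    rw [this]; nlinarith
  have sqe : ∀ c : ℝ, Real.exp (c * t) ^ 2 = Real.exp (2 * c * t) := fun c => by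
    rw [← Real.exp_nat_mul]; congr 1; push_cast; ring
  have k1 : Real.exp (κ * t) ^ 2 ≤ Real.exp (κ * t) := by
    rw [sqe]; apply Real.exp_le_exp.2; nlinarith
  have k2 : t^2 * Real.exp (κ * t) ^ 2 ≤ Real.exp (κ * t) := by
    calc _ ≤ Real.exp (-2 * t) * Real.exp (κ * t) ^ 2 := by gcongr
      _ ≤ _ := by rw [sqe, ← Real.exp_add]; apply Real.exp_le_exp.2; nlinarith
  have l1 : (t * Real.exp (L * t)) ^ 2 ≤ Real.exp (L * t) := by
    rw [mul_pow]
    calc _ ≤ Real.exp (-2 * t) * Real.exp (L * t) ^ 2 := by gcongr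
      _ ≤ _ := by rw [sqe, ← Real.exp_add]; apply Real.exp_le_exp.2; nlinarith
  have l2 : t^2 * (t * Real.exp (L * t)) ^ 2 ≤ Real.exp (L * t) := by
    rw [mul_pow]
    calc _ ≤ Real.exp (-2 * t) * (Real.exp (-2 * t) * Real.exp (L * t) ^ 2) := by gcongr
      _ ≤ _ := by rw [sqe, ← Real.exp_add, ← Real.exp_add]; apply Real.exp_le_exp.2; nlinarith
  have l3 : (Real.exp (L * t) + t * (L * Real.exp (L * t))) ^ 2 ≤ 4 * Real.exp (L * t) := by
    have e1 : Real.exp (L * t) + t * (L * Real.exp (L * t)) = (1 + L * t) * Real.exp (L * t) := by ring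
    have e2 : (1 + L * t)^2 ≤ (2 * Real.exp (-(L * t) / 2))^2 := by
      apply sq_le_sq'
      · have := Real.add_one_le_exp (-(L * t) / 2); nlinarith
      · have := Real.add_one_le_exp (-(L * t) / 2); nlinarith
    rw [e1, mul_pow]
    calc _ ≤ (2 * Real.exp (-(L * t) / 2))^2 * Real.exp (L * t)^2 := by gcongr
      _ = 4 * Real.exp (L * t) := by
        rw [mul_pow, ← Real.exp_nat_mul, ← Real.exp_nat_mul, mul_assoc, ← Real.exp_add]
        norm_num; ring
  have two : ∀ x y : ℝ, (x + y)^2 ≤ 2 * x^2 + 2 * y^2 := fun x y => by nlinarith [sq_nonneg (x - y)]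
  have hA := sq_nonneg A
  have hD := sq_nonneg D
  refine ⟨?_, ?_, ?_⟩
  · refine (two _ _).trans ?_
    rw [mul_pow, mul_pow]
    nlinarith [mul_le_mul_of_nonneg_left k1 hA, mul_le_mul_of_nonneg_left l1 hD]
  · refine (mul_le_mul_of_nonneg_left (two _ _) (sq_nonneg t)).trans ?_
    rw [mul_pow A, mul_pow D]
    nlinarith [mul_le_mul_of_nonneg_left k2 hA, mul_le_mul_of_nonneg_left l2 hD]
  · refine (two _ _).trans ?_
    rw [mul_pow A, mul_pow D, mul_pow κ]
    nlinarith [mul_le_mul_of_nonneg_left k1 (mul_nonneg hA (sq_nonneg κ)),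
      mul_le_mul_of_nonneg_left l3 hD]

/-- The glued trial function. -/
def glue (u : ℝ → ℝ) (κ L t : ℝ) : ℝ :=
  if 0 ≤ t then u t else tail (u 0) (deriv u 0 - κ * u 0) κ L t

lemma glue_pos {u : ℝ → ℝ} (κ L : ℝ) {t : ℝ} (ht : 0 ≤ t) : glue u κ L t = u t := if_pos ht

lemma glue_neg {u : ℝ → ℝ} (κ L : ℝ) {t : ℝ} (ht : t ≤ 0) :
    glue u κ L t = tail (u 0) (deriv u 0 - κ * u 0) κ L t := by
  rcases ht.eq_or_lt with rfl | h
  · simp [glue, tail]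
  · exact if_neg (not_le.2 h)

lemma glue_deriv_pos {u : ℝ → ℝ} (hu : Differentiable ℝ u) (κ L : ℝ) {t : ℝ} (ht : 0 < t) :
    HasDerivAt (glue u κ L) (deriv u t) t := by
  refine (hu t).hasDerivAt.congr_of_eventuallyEq ?_
  filter_upwards [Ioi_mem_nhds ht] with s hs using glue_pos κ L (le_of_lt hs)

lemma glue_deriv_neg (u : ℝ → ℝ) (κ L : ℝ) {t : ℝ} (ht : t < 0) :
    HasDerivAt (glue u κ L) (tail' (u 0) (deriv u 0 - κ * u 0) κ L t) t := by
  refine (tail_deriv _ _ κ L t).congr_of_eventuallyEq ?_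
  filter_upwards [Iio_mem_nhds ht] with s hs using glue_neg κ L (le_of_lt hs)

lemma glue_deriv_zero {u : ℝ → ℝ} (hu : Differentiable ℝ u) (κ L : ℝ) :
    HasDerivAt (glue u κ L) (deriv u 0) 0 := by
  have h1 : HasDerivWithinAt (glue u κ L) (deriv u 0) (Ici 0) 0 :=
    (hu 0).hasDerivAt.hasDerivWithinAt.congr (fun s hs => glue_pos κ L hs) (glue_pos κ L le_rfl)
  have h2 : HasDerivWithinAt (glue u κ L) (deriv u 0) (Iic 0) 0 := by
    have h := (tail_deriv (u 0) (deriv u 0 - κ * u 0) κ L 0)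
    have e : tail' (u 0) (deriv u 0 - κ * u 0) κ L 0 = deriv u 0 := by simp [tail']; ring
    rw [e] at h
    exact h.hasDerivWithinAt.congr (fun s hs => glue_neg κ L hs) (glue_neg κ L le_rfl)
  have := h2.union h1
  rwa [Iic_union_Ici, hasDerivWithinAt_univ] at this

lemma glue_diff {u : ℝ → ℝ} (hu : Differentiable ℝ u) (κ L : ℝ) : Differentiable ℝ (glue u κ L) := by
  intro t
  rcases lt_trichotomy t 0 with h | rfl | h
  · exact (glue_deriv_neg u κ L h).differentiableAt
  · exact (glue_deriv_zero hu κ L).differentiableAt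
  · exact (glue_deriv_pos hu κ L h).differentiableAt

lemma glue_pieces {f : ℝ → ℝ} (h1 : IntegrableOn f (Ioi 0)) (h2 : IntegrableOn f (Iio 0)) :
    Integrable f := by
  have h2' : IntegrableOn f (Iic 0) := by
    rw [integrableOn_Iic_iff_integrableOn_Iio]; exact h2
  have := h2'.union h1
  rwa [Iic_union_Ioi, integrableOn_univ] at this

lemma exp_int (P R κ L : ℝ) (hκ : 0 < κ) (hL : 0 < L) :
    IntegrableOn (fun t => P * Real.exp (κ * t) + R * Real.exp (L * t)) (Iio 0) ∧
    ∫ t in Iio (0:ℝ), (P * Real.exp (κ * t) + R * Real.exp (L * t)) = P / κ + R / L := by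
  have i1 : IntegrableOn (fun t => P * Real.exp (κ * t)) (Iio 0) :=
    ((integrableOn_exp_mul_Iic hκ 0).mono_set Iio_subset_Iic_self).const_mul P
  have i2 : IntegrableOn (fun t => R * Real.exp (L * t)) (Iio 0) :=
    ((integrableOn_exp_mul_Iic hL 0).mono_set Iio_subset_Iic_self).const_mul R
  refine ⟨i1.add i2, ?_⟩
  rw [integral_add i1 i2, integral_const_mul, integral_const_mul, ← integral_Iic_eq_integral_Iio,
    ← integral_Iic_eq_integral_Iio, integral_exp_mul_Iic hκ, integral_exp_mul_Iic hL]
  simp [div_eq_mul_inv]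

lemma glue_mem {u : ℝ → ℝ} (hu : MemB1p u) {κ L : ℝ} (hκ : 2 ≤ κ) (hL : 4 ≤ L) :
    MemB1 (glue u κ L) := by
  have hd := glue_diff hu.1 κ L
  have hm : Measurable (glue u κ L) := hd.continuous.measurable
  have hm' := measurable_deriv (glue u κ L)
  have key : ∀ (f : ℝ → ℝ) (P R : ℝ), Measurable f → (∀ t < 0, 0 ≤ f t) →
      (∀ t < 0, f t ≤ P * Real.exp (κ * t) + R * Real.exp (L * t)) → IntegrableOn f (Iio 0) := by
    intro f P R hf h0 hb
    refine Integrable.mono' (exp_int P R κ L (by linarith) (by linarith)).1 (by fun_prop) ?_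
    refine (ae_restrict_iff' measurableSet_Iio).2 (ae_of_all _ fun t ht => ?_)
    rw [Real.norm_eq_abs, abs_of_nonneg (h0 t ht)]
    exact hb t ht
  have tb := fun t ht => tail_bounds (u 0) (deriv u 0 - κ * u 0) κ L t hκ hL ht
  refine ⟨hd, glue_pieces ?_ ?_, glue_pieces ?_ ?_, glue_pieces ?_ ?_⟩
  · exact hu.2.1.congr_fun (fun t ht => by simp only; rw [glue_pos κ L (le_of_lt ht)]) measurableSet_Ioi
  · refine key _ (2 * u 0 ^ 2) (2 * (deriv u 0 - κ * u 0)^2) (by fun_prop)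
      (fun t _ => sq_nonneg _) (fun t ht => ?_)
    · rw [glue_neg κ L ht.le]; exact (tb t ht).1
  · exact hu.2.2.1.congr_fun (fun t ht => by simp only; rw [(glue_deriv_pos hu.1 κ L ht).deriv])
      measurableSet_Ioi
  · refine key _ (2 * u 0 ^ 2 * κ^2) (8 * (deriv u 0 - κ * u 0)^2) (by fun_prop)
      (fun t _ => sq_nonneg _) (fun t ht => ?_)
    · rw [(glue_deriv_neg u κ L ht).deriv]; exact (tb t ht).2.2
  · exact hu.2.2.2.congr_fun (fun t ht => by simp only; rw [glue_pos κ L (le_of_lt ht)]) measurableSet_Ioi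
  · refine key _ (2 * u 0 ^ 2) (2 * (deriv u 0 - κ * u 0)^2) (by fun_prop)
      (fun t _ => by positivity) (fun t ht => ?_)
    · rw [glue_neg κ L ht.le]; exact (tb t ht).2.1

lemma glue_np {u : ℝ → ℝ} (κ L : ℝ) : np (glue u κ L) = np u := by
  unfold np
  exact setIntegral_congr_fun measurableSet_Ioi
    (fun t ht => by rw [glue_pos κ L (le_of_lt ht)])

lemma glue_q {u : ℝ → ℝ} (hu : MemB1p u) (ξ κ L : ℝ) :
    qRobin 0 ξ (glue u κ L) = qRobin 0 ξ u := by
  unfold qRobin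
  rw [zero_mul, zero_mul]
  congr 1
  exact setIntegral_congr_fun measurableSet_Ioi
    (fun t ht => by rw [glue_pos κ L (le_of_lt ht), (glue_deriv_pos hu.1 κ L ht).deriv])

lemma glue_np_neg {u : ℝ → ℝ} (hu : MemB1p u) {κ L : ℝ} (hκ : 2 ≤ κ) (hL : 4 ≤ L) :
    np (rfx (glue u κ L)) ≤ 2 * u 0 ^ 2 / κ + 2 * (deriv u 0 - κ * u 0)^2 / L := by
  have he := exp_int (2 * u 0 ^ 2) (2 * (deriv u 0 - κ * u 0)^2) κ L (by linarith) (by linarith)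
  rw [np_rfx, ← he.2]
  refine setIntegral_mono_on (glue_mem hu hκ hL).2.1.integrableOn he.1 measurableSet_Iio ?_
  intro t ht
  rw [glue_neg κ L (le_of_lt ht)]
  exact (tail_bounds _ _ κ L t hκ hL ht).1

lemma glue_q_neg {u : ℝ → ℝ} (hu : MemB1p u) (ξ : ℝ) {κ L : ℝ} (hκ : 2 ≤ κ) (hL : 4 ≤ L) :
    qRobin 0 (-ξ) (rfx (glue u κ L)) ≤ (2 * κ^2 + 4 + 4 * ξ^2) * u 0 ^ 2 / κ
      + (12 + 4 * ξ^2) * (deriv u 0 - κ * u 0)^2 / L := by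
  have he := exp_int ((2 * κ^2 + 4 + 4 * ξ^2) * u 0 ^ 2) ((12 + 4 * ξ^2) * (deriv u 0 - κ * u 0)^2)
    κ L (by linarith) (by linarith)
  rw [q_rfx, ← he.2]
  refine setIntegral_mono_on (q_integrable_neg (glue_mem hu hκ hL) ξ) he.1 measurableSet_Iio ?_
  intro t ht
  rw [glue_neg κ L (le_of_lt ht), (glue_deriv_neg u κ L ht).deriv]
  obtain ⟨b1, b2, b3⟩ := tail_bounds (u 0) (deriv u 0 - κ * u 0) κ L t hκ hL ht
  set T := tail (u 0) (deriv u 0 - κ * u 0) κ L t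
  have h1 : (t - ξ)^2 * T^2 ≤ 2 * (t^2 * T^2) + 2 * ξ^2 * T^2 := by
    nlinarith [mul_nonneg (sq_nonneg (t + ξ)) (sq_nonneg T)]
  have h2 := mul_le_mul_of_nonneg_left b1 (sq_nonneg ξ)
  nlinarith

set_option maxHeartbeats 1000000 in
/-- Upper bound for `α` whenever the form is nonnegative. -/
lemma alpha_upper (a : ℝ) (ha : 0 < a) : ∃ C : ℝ, 0 < C ∧ ∃ M : ℝ, 0 < M ∧ ∀ m : ℝ, M ≤ m →
    ∀ α : ℝ, 0 < α → 0 ≤ botE a m α → α ≤ Theta0 + C / Real.sqrt m := by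
  have hT := Theta0_lt
  have hT0 := Theta0_pos
  set k0 := 10 + 10 / (7/10 - Theta0) + 8 * (4 * a + 1) with hk0
  have hd : 0 < 10 / (7/10 - Theta0) := div_pos (by norm_num) (by linarith)
  have hk00 : 0 < k0 := by positivity
  obtain ⟨K, hK⟩ : ∃ K : ℝ, K = 16 + 8 * 300^2 := ⟨_, rfl⟩
  have hK0 : 0 < K := by rw [hK]; norm_num
  refine ⟨2 * (1 + (2 * K + 1)) + 2 * (4 * a + 1), by positivity, k0^2, by positivity, fun m hm α hα hb => ?_⟩
  set κ := Real.sqrt m with hκ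
  have hκk : k0 ≤ κ := Real.le_sqrt_of_sq_le hm
  have hκ10 : 10 ≤ κ := by linarith
  have hκ0 : 0 < κ := by linarith
  have hm0 : 0 < m := lt_of_lt_of_le (by positivity) hm
  have hκm : κ^2 = m := Real.sq_sqrt hm0.le
  obtain ⟨ξ, u, hu, hp, hq⟩ := near_min (1/κ) (by positivity)
  have hη : Theta0 + 1/κ ≤ 7/10 := by
    have : 1/κ ≤ 7/10 - Theta0 := by
      rw [div_le_iff₀ hκ0]
      have h3 : 10 / (7/10 - Theta0) ≤ κ := by linarith
      rw [div_le_iff₀ (by linarith)] at h3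
      linarith
    linarith
  obtain ⟨hA, hξ⟩ := near_bdd hu hp (hq.trans (mul_le_mul_of_nonneg_right hη hp.le))
  set D2 := (deriv u 0 - κ * u 0)^2 with hD2
  have hD20 : 0 ≤ D2 := sq_nonneg _
  set N := np u with hN
  -- choose L
  set L := 4 + (12 + 4 * ξ^2 + 2 * a) * D2 * κ / N with hL
  have hL4 : 4 ≤ L := by
    have : 0 ≤ (12 + 4 * ξ^2 + 2 * a) * D2 * κ / N := by positivity
    linarith
  have hLD : ((12 + 4 * ξ^2) + 2 * a) * D2 / L ≤ N / κ := by
    rw [div_le_div_iff₀ (by linarith) hκ0]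
    have : (12 + 4 * ξ^2 + 2 * a) * D2 * κ / N * N = (12 + 4 * ξ^2 + 2 * a) * D2 * κ := by
      field_simp
    nlinarith
  have hmem := glue_mem hu (κ := κ) (L := L) (by linarith) hL4
  have h0 := botE_le hmem ha hm0 α ξ
  have h0' : 0 ≤ QI a m α ξ (glue u κ L) := le_trans (mul_nonneg hb (nR_nonneg _)) h0
  rw [QI_eq hmem, glue_np, glue_q hu] at h0'
  have e1 := glue_np_neg hu (κ := κ) (L := L) (by linarith) hL4
  have e2 := glue_q_neg hu ξ (κ := κ) (L := L) (by linarith) hL4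
  rw [← hD2] at e1 e2
  -- simplify the two bounds
  have p1 : 0 ≤ D2 / L := div_nonneg hD20 (by linarith)
  have s1 : a * np (rfx (glue u κ L)) ≤ (4 * a + 1) * (N / κ) := by
    have q1 : 2 * a * D2 / L ≤ N / κ := by
      refine le_trans ?_ hLD
      have : 0 ≤ 12 + 4 * ξ^2 := by positivity
      have := mul_nonneg this p1
      rw [mul_div_assoc, mul_div_assoc, add_mul]; linarith
    have q2 : 2 * u 0 ^ 2 / κ ≤ 4 * (N / κ) := by
      rw [← mul_div_assoc]; exact div_le_div_of_nonneg_right (by linarith) hκ0.le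
    have := mul_le_mul_of_nonneg_left (e1.trans (add_le_add_left q2 _)) ha.le
    have r : a * (4 * (N / κ) + 2 * D2 / L) = 4 * a * (N / κ) + 2 * a * D2 / L := by ring
    linarith
  have s2 : 1/m * qRobin 0 (-ξ) (rfx (glue u κ L)) ≤ (2 * K + 1) * (N / κ) := by
    have q1 : (12 + 4 * ξ^2) * D2 / L ≤ N / κ := by
      refine le_trans ?_ hLD
      have := mul_nonneg (mul_nonneg zero_le_two ha.le) p1
      rw [mul_div_assoc, mul_div_assoc, add_mul]; linarith
    have q2 : (2 * κ^2 + 4 + 4 * ξ^2) * u 0 ^ 2 / κ ≤ m * (2 * K * (N / κ)) := by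
      have hm1 : 1 ≤ m := by rw [← hκm]; exact one_le_pow₀ (by linarith)
      have : (2 * κ^2 + 4 + 4 * ξ^2) * u 0 ^ 2 ≤ (m * K) * (2 * N) := by
        apply mul_le_mul _ hA (sq_nonneg _) (by positivity)
        rw [hκm, hK]; norm_num at hξ ⊢; linarith
      calc _ ≤ (m * K) * (2 * N) / κ := div_le_div_of_nonneg_right this hκ0.le
        _ = _ := by ring
    have q3 : N / κ ≤ m * (N / κ) := by
      have hm1 : 1 ≤ m := by rw [← hκm]; exact one_le_pow₀ (by linarith)
      exact le_mul_of_one_le_left (by positivity) hm1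
    rw [one_div, inv_mul_le_iff₀ hm0]
    linarith
  have fin1 : α * N ≤ (Theta0 + 1/κ) * N + (2 * K + 1) * (N / κ) + α * ((4 * a + 1) * (N / κ)) := by
    have := mul_le_mul_of_nonneg_left s1 hα.le
    linarith
  have fin2 : α ≤ Theta0 + 1/κ + (2 * K + 1) * (1 / κ) + α * ((4 * a + 1) * (1 / κ)) := by
    refine le_of_mul_le_mul_right ?_ hp
    calc _ ≤ _ := fin1
      _ = _ := by ring
  set x := 1/κ with hx
  have hx0 : 0 < x := by positivity
  have hxa : (4 * a + 1) * x ≤ 1/8 := by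
    rw [hx, mul_one_div, div_le_iff₀ hκ0]; linarith
  have hgoal : ∀ c : ℝ, c / κ = c * x := fun c => by rw [hx]; ring
  rw [hgoal]
  set y := (4 * a + 1) * x with hy
  set z := (1 + (2 * K + 1)) * x with hz
  have hy0 : 0 < y := by positivity
  have hz0 : 0 < z := by positivity
  have f3 : α ≤ Theta0 + z + α * y := by rw [hz]; linarith
  have f4 : α ≤ 2 * (Theta0 + z) := by
    have := mul_le_mul_of_nonneg_left hxa hα.le
    linarith
  have f5 : α * y ≤ 2 * (Theta0 + z) * y := mul_le_mul_of_nonneg_right f4 hy0.le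
  have f6 : z * y ≤ z * (1/8) := mul_le_mul_of_nonneg_left hxa hz0.le
  have f7 : Theta0 * y ≤ 7/10 * y := mul_le_mul_of_nonneg_right hT.le hy0.le
  have : (2 * (1 + (2 * K + 1)) + 2 * (4 * a + 1)) * x = 2 * z + 2 * y := by rw [hz, hy]; ring
  rw [this]
  linarith

/-- there is `C > 0` such that `Θ₀ < α(a,m) ≤ Θ₀ + C/√m` for all
large `m`; in particular `α(a,m) → Θ₀` as `m → ∞`. -/
theorem alpha_limit_m_to_infty (a : ℝ) (ha : 0 < a) :
    (∃ C : ℝ, 0 < C ∧ ∃ M : ℝ, ∀ m : ℝ, M ≤ m → ∀ α : ℝ,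
      0 < α → sInf (Set.range (mu1 a m α)) = 0 →
      Theta0 < α ∧ α ≤ Theta0 + C / Real.sqrt m) ∧
    Tendsto (fun m => alphaF a m) atTop (𝓝 Theta0) := by
  obtain ⟨C, hC, M, hM, hup⟩ := alpha_upper a ha
  have main : ∀ m : ℝ, M ≤ m → ∀ α : ℝ, 0 < α → sInf (Set.range (mu1 a m α)) = 0 →
      Theta0 < α ∧ α ≤ Theta0 + C / Real.sqrt m := by
    intro m hm α hα h0
    refine ⟨?_, hup m hm α hα (le_of_eq h0.symm)⟩
    by_contra! hle
    have := botE_pos ha (lt_of_lt_of_le hM hm) hα hle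
    unfold botE at this
    linarith
  refine ⟨⟨C, hC, M, main⟩, ?_⟩
  have key : ∀ m : ℝ, M ≤ m → Theta0 ≤ alphaF a m ∧ alphaF a m ≤ Theta0 + C / Real.sqrt m := by
    intro m hm
    have hm0 := lt_of_lt_of_le hM hm
    have hT := Theta0_pos
    have hCm : 0 ≤ C / Real.sqrt m := by positivity
    have h1 := botE_pos ha hm0 hT le_rfl
    have h2 : botE a m (Theta0 + C / Real.sqrt m + 1) ≤ 0 := by
      by_contra! hc
      have := hup m hm _ (by linarith) hc.le
      linarith
    obtain ⟨β, ⟨hβ1, _⟩, hβ⟩ := intermediate_value_Icc' (f := botE a m)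
      (show Theta0 ≤ Theta0 + C / Real.sqrt m + 1 by linarith) (botE_cont ha hm0).continuousOn
      (show (0:ℝ) ∈ Icc _ _ from ⟨h2, h1.le⟩)
    have hmem : β ∈ {α : ℝ | 0 < α ∧ sInf (Set.range (mu1 a m α)) = 0} :=
      ⟨lt_of_lt_of_le hT hβ1, hβ⟩
    constructor
    · exact le_csInf ⟨β, hmem⟩ fun α hα => (main m hm α hα.1 hα.2).1.le
    · exact (csInf_le ⟨0, fun α hα => hα.1.le⟩ hmem).trans (main m hm β hmem.1 hmem.2).2
  have hlim : Tendsto (fun m : ℝ => Theta0 + C / Real.sqrt m) atTop (𝓝 Theta0) := by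
    have := (tendsto_const_nhds (x := C)).div_atTop Real.tendsto_sqrt_atTop
    simpa using this.const_add Theta0
  refine tendsto_of_tendsto_of_tendsto_of_le_of_le' tendsto_const_nhds hlim ?_ ?_
  · filter_upwards [eventually_ge_atTop M] with m hm using (key m hm).1
  · filter_upwards [eventually_ge_atTop M] with m hm using (key m hm).2
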